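/- For the radially symmetric uniform structure, D*(Θ) = ((M−V)/M)·log N, and the infimum defining D*(Θ) is attained at the uniform mixture (1/N) Σ_{θ∈Θ} θ. -/

import Mathlib

open Finset

noncomputable section

/-- `p` is a probability vector on the arm set `Fin K`. -/
def IsProbVec {K : ℕ} (p : Fin K → ℝ) : Prop :=
  (∀ j, 0 ≤ p j) ∧ ∑ j, p j = 1

/-- KL-divergence `D(p‖q) = ∑_{j : p(j)>0} p(j) log (p(j)/q(j))`, equal to `+∞` if
`p(j) > 0` for some `j` with `q(j) = 0`. -/
def KL {K : ℕ} (p q : Fin K → ℝ) : ENNReal :=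
  if ∀ j, q j = 0 → p j = 0 then
    ENNReal.ofReal (∑ j ∈ Finset.univ.filter (fun j : Fin K => 0 < p j),
      p j * Real.log (p j / q j))
  else ⊤

/-- `D*(Θ) = inf_{τ ∈ Δ_{K-1}} max_{θ ∈ Θ} D(θ‖τ)`. -/
def Dstar (K N : ℕ) (θ : ℕ → Fin K → ℝ) : ENNReal :=
  ⨅ τ : {τ : Fin K → ℝ // IsProbVec τ}, ⨆ i ∈ Finset.range N, KL (θ i) τ.1

/-!
Write `t` for a mixture `∑ i, w i • θ i`. The compensation identity
`∑ i, w i * D(θ i‖τ) = ∑ i, w i * D(θ i‖t) + D(t‖τ)` and the Gibbs inequality `0 ≤ D(t‖τ)` show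
that the average divergence to `t` bounds `D*` from below. Hence `D*` is attained at any mixture
equidistant from the components it charges and no farther from the others. In the radially
symmetric case the uniform mixture is equidistant from all the policies: an arm of `U i` lies in all
`N` supports if it belongs to the core `C`, and in `U i` alone otherwise, so that it contributes
`0` or `(log N) / M` to `D(θ i‖t)`.
-/

section RelEntropy

variable {α : Type*} [Fintype α]

/-- The relative entropy `∑ j, p j * log (p j / q j)` as a real number. It is the KL-divergence only
when `p` vanishes wherever `q` does: a term with `q j = 0` counts as `0`, not as `+∞`. -/
def relEntropy (p q : α → ℝ) : ℝ :=
  ∑ j, p j * Real.log (p j / q j)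

theorem relEntropy_nonneg {p q : α → ℝ} (hp : ∀ j, 0 ≤ p j) (hq : ∀ j, 0 ≤ q j)
    (hac : ∀ j, q j = 0 → p j = 0) (hsum : ∑ j, q j ≤ ∑ j, p j) : 0 ≤ relEntropy p q := by
  have sub_le_mul_log (j : α) : p j - q j ≤ p j * Real.log (p j / q j) := by
    rcases (hp j).eq_or_lt with hpj | hpj
    · simpa [← hpj] using hq j
    have hqj : 0 < q j := (hq j).lt_of_ne' fun h => hpj.ne' (hac j h)
    calc p j - q j = p j * (1 - (p j / q j)⁻¹) := by field_simp
      _ ≤ p j * Real.log (p j / q j) :=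
        mul_le_mul_of_nonneg_left (Real.one_sub_inv_le_log_of_pos (div_pos hpj hqj)) hpj.le
  calc 0 ≤ ∑ j, (p j - q j) := by rw [sum_sub_distrib]; exact sub_nonneg.2 hsum
    _ ≤ relEntropy p q := sum_le_sum fun j _ => sub_le_mul_log j

end RelEntropy

section Mixture

variable {α ι : Type*} {s : Finset ι} {w : ι → ℝ} {θ : ι → α → ℝ}

/-- The mixture of the vectors `θ i`, `i ∈ s`, with weights `w i`. -/
def mixture (s : Finset ι) (w : ι → ℝ) (θ : ι → α → ℝ) (j : α) : ℝ :=
  ∑ i ∈ s, w i * θ i j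

theorem eq_zero_of_mixture_eq_zero (hw : ∀ i ∈ s, 0 ≤ w i) (hθ : ∀ i ∈ s, ∀ j, 0 ≤ θ i j)
    {i : ι} (hi : i ∈ s) (hwi : w i ≠ 0) {j : α} (h : mixture s w θ j = 0) : θ i j = 0 := by
  have hterm : w i * θ i j = 0 :=
    (sum_eq_zero_iff_of_nonneg fun k hk => mul_nonneg (hw k hk) (hθ k hk j)).1 h i hi
  exact (mul_eq_zero.1 hterm).resolve_left hwi

theorem sum_mul_relEntropy_eq_add_relEntropy_mixture [Fintype α] {τ : α → ℝ}
    (hw : ∀ i ∈ s, 0 ≤ w i) (hθ : ∀ i ∈ s, ∀ j, 0 ≤ θ i j)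
    (hac : ∀ i ∈ s, w i ≠ 0 → ∀ j, τ j = 0 → θ i j = 0) :
    ∑ i ∈ s, w i * relEntropy (θ i) τ =
      ∑ i ∈ s, w i * relEntropy (θ i) (mixture s w θ) + relEntropy (mixture s w θ) τ := by
  have log_split (j : α) (i : ι) (hi : i ∈ s) :
      w i * (θ i j * Real.log (θ i j / τ j)) =
        w i * (θ i j * Real.log (θ i j / mixture s w θ j)) +
          w i * θ i j * Real.log (mixture s w θ j / τ j) := by
    by_cases hwi : w i = 0
    · simp [hwi]
    by_cases hθij : θ i j = 0
    · simp [hθij]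
    have hmix : mixture s w θ j ≠ 0 := mt (eq_zero_of_mixture_eq_zero hw hθ hi hwi) hθij
    have hτj : τ j ≠ 0 := mt (hac i hi hwi j) hθij
    rw [Real.log_div hθij hτj, Real.log_div hθij hmix, Real.log_div hmix hτj]
    ring
  have sum_swap (q : α → ℝ) : ∑ i ∈ s, w i * relEntropy (θ i) q =
      ∑ j, ∑ i ∈ s, w i * (θ i j * Real.log (θ i j / q j)) := by
    simp only [relEntropy, mul_sum]
    exact sum_comm
  rw [sum_swap, sum_swap, relEntropy, ← sum_add_distrib]
  refine sum_congr rfl fun j _ => ?_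
  rw [sum_congr rfl (log_split j), sum_add_distrib, ← sum_mul]
  rfl

end Mixture

section KL

variable {K : ℕ} {ι : Type*} {s : Finset ι} {w : ι → ℝ} {θ : ι → Fin K → ℝ}

theorem KL_eq_ofReal_relEntropy {p q : Fin K → ℝ} (hp : ∀ j, 0 ≤ p j)
    (hac : ∀ j, q j = 0 → p j = 0) : KL p q = ENNReal.ofReal (relEntropy p q) := by
  rw [KL, if_pos hac, relEntropy]
  congr 1
  refine sum_subset (filter_subset _ _) fun j _ hj => ?_
  have hpj : p j = 0 := le_antisymm (by simpa using hj) (hp j)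
  rw [hpj, zero_mul]

theorem isProbVec_mixture (hw : ∀ i ∈ s, 0 ≤ w i) (hw_sum : ∑ i ∈ s, w i = 1)
    (hθ : ∀ i ∈ s, IsProbVec (θ i)) : IsProbVec (mixture s w θ) := by
  refine ⟨fun j => sum_nonneg fun i hi => mul_nonneg (hw i hi) ((hθ i hi).1 j), ?_⟩
  calc ∑ j, mixture s w θ j = ∑ i ∈ s, w i * ∑ j, θ i j := by
        simp only [mixture, mul_sum]
        exact sum_comm
    _ = ∑ i ∈ s, w i := sum_congr rfl fun i hi => by rw [(hθ i hi).2, mul_one]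
    _ = 1 := hw_sum

theorem sum_ofReal_mul_KL {q : Fin K → ℝ} (hw : ∀ i ∈ s, 0 ≤ w i)
    (hθ : ∀ i ∈ s, IsProbVec (θ i)) (hq : IsProbVec q)
    (hac : ∀ i ∈ s, w i ≠ 0 → ∀ j, q j = 0 → θ i j = 0) :
    ∑ i ∈ s, ENNReal.ofReal (w i) * KL (θ i) q =
      ENNReal.ofReal (∑ i ∈ s, w i * relEntropy (θ i) q) := by
  rw [ENNReal.ofReal_sum_of_nonneg]
  · refine sum_congr rfl fun i hi => ?_
    by_cases hwi : w i = 0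
    · simp [hwi]
    rw [KL_eq_ofReal_relEntropy (hθ i hi).1 (hac i hi hwi), ENNReal.ofReal_mul (hw i hi)]
  · intro i hi
    by_cases hwi : w i = 0
    · simp [hwi]
    exact mul_nonneg (hw i hi) <| relEntropy_nonneg (hθ i hi).1 hq.1 (hac i hi hwi)
      (hq.2.trans (hθ i hi).2.symm).le

theorem sum_ofReal_mul_KL_mixture_le {τ : Fin K → ℝ} (hw : ∀ i ∈ s, 0 ≤ w i)
    (hw_sum : ∑ i ∈ s, w i = 1) (hθ : ∀ i ∈ s, IsProbVec (θ i)) (hτ : IsProbVec τ) :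
    ∑ i ∈ s, ENNReal.ofReal (w i) * KL (θ i) (mixture s w θ) ≤
      ∑ i ∈ s, ENNReal.ofReal (w i) * KL (θ i) τ := by
  have hθ_nonneg : ∀ i ∈ s, ∀ j, 0 ≤ θ i j := fun i hi => (hθ i hi).1
  have hmix : IsProbVec (mixture s w θ) := isProbVec_mixture hw hw_sum hθ
  by_cases hac : ∀ i ∈ s, w i ≠ 0 → ∀ j, τ j = 0 → θ i j = 0
  · rw [sum_ofReal_mul_KL hw hθ hτ hac, sum_ofReal_mul_KL hw hθ hmix
      fun i hi hwi _ => eq_zero_of_mixture_eq_zero hw hθ_nonneg hi hwi]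
    refine ENNReal.ofReal_le_ofReal ?_
    rw [sum_mul_relEntropy_eq_add_relEntropy_mixture hw hθ_nonneg hac]
    have mixture_ac (j : Fin K) (hτj : τ j = 0) : mixture s w θ j = 0 :=
      sum_eq_zero fun i hi => mul_eq_zero.2 <| or_iff_not_imp_left.2 fun hwi => hac i hi hwi j hτj
    exact le_add_of_nonneg_right <|
      relEntropy_nonneg hmix.1 hτ.1 mixture_ac (hτ.2.trans hmix.2.symm).le
  · push Not at hac
    obtain ⟨i, hi, hwi, j, hτj, hθij⟩ := hac
    have hKL : KL (θ i) τ = ⊤ := if_neg fun h => hθij (h j hτj)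
    have hwi_pos : 0 < w i := (hw i hi).lt_of_ne' hwi
    have hterm : ENNReal.ofReal (w i) * KL (θ i) τ = ⊤ := by
      rw [hKL, ENNReal.mul_top (ENNReal.ofReal_pos.2 hwi_pos).ne']
    exact le_top.trans_eq (ENNReal.sum_eq_top.2 ⟨i, hi, hterm⟩).symm

end KL

section Dstar

variable {K N : ℕ} {w : ℕ → ℝ} {θ : ℕ → Fin K → ℝ}

theorem sum_ofReal_mul_KL_mixture_le_Dstar (hw : ∀ i ∈ range N, 0 ≤ w i)
    (hw_sum : ∑ i ∈ range N, w i = 1) (hθ : ∀ i ∈ range N, IsProbVec (θ i)) :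
    ∑ i ∈ range N, ENNReal.ofReal (w i) * KL (θ i) (mixture (range N) w θ) ≤ Dstar K N θ := by
  refine le_iInf fun τ => ?_
  calc ∑ i ∈ range N, ENNReal.ofReal (w i) * KL (θ i) (mixture (range N) w θ)
      ≤ ∑ i ∈ range N, ENNReal.ofReal (w i) * KL (θ i) τ :=
        sum_ofReal_mul_KL_mixture_le hw hw_sum hθ τ.2
    _ ≤ ∑ i ∈ range N, ENNReal.ofReal (w i) * ⨆ k ∈ range N, KL (θ k) τ :=
        sum_le_sum fun i hi => mul_le_mul_right (le_iSup₂ (f := fun k _ => KL (θ k) τ) i hi) _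
    _ = ⨆ k ∈ range N, KL (θ k) τ := by
        rw [← sum_mul, ← ENNReal.ofReal_sum_of_nonneg hw, hw_sum, ENNReal.ofReal_one, one_mul]

theorem iSup_KL_mixture_eq_and_Dstar_eq {d : ENNReal} (hw : ∀ i ∈ range N, 0 ≤ w i)
    (hw_sum : ∑ i ∈ range N, w i = 1) (hθ : ∀ i ∈ range N, IsProbVec (θ i))
    (hle : ∀ i ∈ range N, KL (θ i) (mixture (range N) w θ) ≤ d)
    (heq : ∀ i ∈ range N, w i ≠ 0 → KL (θ i) (mixture (range N) w θ) = d) :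
    ⨆ i ∈ range N, KL (θ i) (mixture (range N) w θ) = d ∧ Dstar K N θ = d := by
  have hDstar_le : Dstar K N θ ≤ ⨆ i ∈ range N, KL (θ i) (mixture (range N) w θ) :=
    iInf_le (fun τ : {τ : Fin K → ℝ // IsProbVec τ} => ⨆ i ∈ range N, KL (θ i) τ.1)
      ⟨mixture (range N) w θ, isProbVec_mixture hw hw_sum hθ⟩
  have hsup_le : ⨆ i ∈ range N, KL (θ i) (mixture (range N) w θ) ≤ d := iSup₂_le hle
  have hle_Dstar : d ≤ Dstar K N θ :=
    calc d = ∑ i ∈ range N, ENNReal.ofReal (w i) * d := by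
          rw [← sum_mul, ← ENNReal.ofReal_sum_of_nonneg hw, hw_sum, ENNReal.ofReal_one, one_mul]
      _ = ∑ i ∈ range N, ENNReal.ofReal (w i) * KL (θ i) (mixture (range N) w θ) := by
          refine sum_congr rfl fun i hi => ?_
          by_cases hwi : w i = 0
          · simp [hwi]
          · rw [heq i hi hwi]
      _ ≤ Dstar K N θ := sum_ofReal_mul_KL_mixture_le_Dstar hw hw_sum hθ
  exact ⟨hsup_le.antisymm (hle_Dstar.trans hDstar_le), (hDstar_le.trans hsup_le).antisymm hle_Dstar⟩

end Dstar

section Uniform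

variable {α ι : Type*} [DecidableEq α] {s : Finset ι} {U : ι → Finset α} {M : ℕ}

/-- The uniform distribution on `A`, as a vector; it is `0` when `A` is empty. -/
def uniformOn (A : Finset α) (j : α) : ℝ :=
  if j ∈ A then 1 / (#A : ℝ) else 0

theorem uniformOn_nonneg (A : Finset α) (j : α) : 0 ≤ uniformOn A j := by
  unfold uniformOn
  positivity

theorem isProbVec_uniformOn {K : ℕ} {A : Finset (Fin K)} (hA : A.Nonempty) :
    IsProbVec (uniformOn A) := by
  have hcard : (#A : ℝ) ≠ 0 := Nat.cast_ne_zero.2 hA.card_ne_zero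
  refine ⟨uniformOn_nonneg A, ?_⟩
  simp only [uniformOn, sum_ite_mem, univ_inter, sum_const, nsmul_eq_mul]
  exact mul_one_div_cancel hcard

theorem mixture_uniformOn_apply (hU : ∀ i ∈ s, #(U i) = M) (j : α) :
    mixture s (fun _ => 1 / (#s : ℝ)) (fun i => uniformOn (U i)) j =
      #{i ∈ s | j ∈ U i} / (#s * M) := by
  have hterm : ∀ i ∈ s, 1 / (#s : ℝ) * uniformOn (U i) j =
      if j ∈ U i then 1 / ((#s : ℝ) * M) else 0 := fun i hi => by
    simp only [uniformOn, hU i hi, mul_ite, mul_zero, one_div_mul_one_div]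
  rw [mixture, sum_congr rfl hterm, ← sum_filter, sum_const, nsmul_eq_mul, mul_one_div]

theorem relEntropy_uniformOn_mixture [Fintype α] (hU : ∀ i ∈ s, #(U i) = M) {i : ι} (hi : i ∈ s) :
    relEntropy (uniformOn (U i)) (mixture s (fun _ => 1 / (#s : ℝ)) fun k => uniformOn (U k)) =
      (∑ j ∈ U i, Real.log (#s / #{k ∈ s | j ∈ U k})) / M := by
  have hratio : ∀ j ∈ U i, 1 / (M : ℝ) / (#{k ∈ s | j ∈ U k} / (#s * M)) =
      #s / #{k ∈ s | j ∈ U k} := fun j hj => by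
    have hM : (M : ℝ) ≠ 0 := by
      rw [← hU i hi]
      exact Nat.cast_ne_zero.2 (card_ne_zero_of_mem hj)
    field_simp
  simp only [relEntropy, mixture_uniformOn_apply hU]
  simp only [uniformOn, hU i hi, ite_mul, zero_mul, sum_ite_mem, univ_inter]
  rw [sum_div]
  refine sum_congr rfl fun j hj => ?_
  rw [if_pos hj, hratio j hj, one_div_mul_eq_div]

end Uniform

section Sunflower

variable {α ι : Type*} [DecidableEq α] {s : Finset ι} {U : ι → Finset α} {C : Finset α}

theorem core_subset_of_pairwise_inter_eq (hs : s.Nontrivial)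
    (hinter : (s : Set ι).Pairwise fun i k => U i ∩ U k = C) {i : ι} (hi : i ∈ s) : C ⊆ U i := by
  obtain ⟨k, hk, hki⟩ := hs.exists_ne i
  rw [← hinter hi hk hki.symm]
  exact inter_subset_left

theorem filter_mem_eq_singleton_of_notMem_core
    (hinter : (s : Set ι).Pairwise fun i k => U i ∩ U k = C) {i : ι} (hi : i ∈ s) {j : α}
    (hj : j ∈ U i) (hjC : j ∉ C) : {k ∈ s | j ∈ U k} = ({i} : Finset ι) := by
  refine eq_singleton_iff_unique_mem.2 ⟨mem_filter.2 ⟨hi, hj⟩, fun k hk => ?_⟩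
  obtain ⟨hks, hjk⟩ := mem_filter.1 hk
  by_contra hki
  exact hjC (hinter hks hi hki ▸ mem_inter.2 ⟨hjk, hj⟩)

theorem sum_log_card_div_card_filter_mem (hs : s.Nontrivial)
    (hinter : (s : Set ι).Pairwise fun i k => U i ∩ U k = C) {i : ι} (hi : i ∈ s) :
    ∑ j ∈ U i, Real.log (#s / #{k ∈ s | j ∈ U k}) = ((#(U i) : ℝ) - #C) * Real.log #s := by
  have hCU : ∀ k ∈ s, C ⊆ U k := fun k hk => core_subset_of_pairwise_inter_eq hs hinter hk
  have hcard : (#s : ℝ) ≠ 0 := Nat.cast_ne_zero.2 hs.nonempty.card_ne_zero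
  have hcore : ∀ j ∈ C, Real.log (#s / #{k ∈ s | j ∈ U k}) = 0 := fun j hj => by
    rw [filter_true_of_mem fun k hk => hCU k hk hj, div_self hcard, Real.log_one]
  have hpetal : ∀ j ∈ U i \ C, Real.log (#s / #{k ∈ s | j ∈ U k}) = Real.log #s := fun j hj => by
    obtain ⟨hjU, hjC⟩ := mem_sdiff.1 hj
    rw [filter_mem_eq_singleton_of_notMem_core hinter hi hjU hjC, card_singleton, Nat.cast_one,
      div_one]
  rw [← sum_sdiff (hCU i hi), sum_eq_zero hcore, add_zero, sum_congr rfl hpetal, sum_const,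
    nsmul_eq_mul, cast_card_sdiff (hCU i hi)]

theorem KL_uniformOn_mixture_of_pairwise_inter_eq {K M : ℕ} {U : ι → Finset (Fin K)}
    {C : Finset (Fin K)} (hs : s.Nontrivial) (hU : ∀ i ∈ s, #(U i) = M)
    (hinter : (s : Set ι).Pairwise fun i k => U i ∩ U k = C) {i : ι} (hi : i ∈ s) :
    KL (uniformOn (U i)) (mixture s (fun _ => 1 / (#s : ℝ)) fun k => uniformOn (U k)) =
      ENNReal.ofReal (((M : ℝ) - #C) / M * Real.log #s) := by
  have hweight : 1 / (#s : ℝ) ≠ 0 :=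
    one_div_ne_zero (Nat.cast_ne_zero.2 hs.nonempty.card_ne_zero)
  have hac (j : Fin K) :
      mixture s (fun _ => 1 / (#s : ℝ)) (fun k => uniformOn (U k)) j = 0 → uniformOn (U i) j = 0 :=
    eq_zero_of_mixture_eq_zero (θ := fun k => uniformOn (U k)) (fun _ _ => by positivity)
      (fun k _ => uniformOn_nonneg (U k)) hi hweight
  rw [KL_eq_ofReal_relEntropy (uniformOn_nonneg (U i)) hac,
    relEntropy_uniformOn_mixture hU hi, sum_log_card_div_card_filter_mem hs hinter hi, hU i hi,
    div_mul_eq_mul_div]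

end Sunflower

theorem Dstar_radially_symmetric_general {K N M V : ℕ} (hN : 2 ≤ N) (hM : 0 < M)
    (θ : ℕ → Fin K → ℝ) (U : ℕ → Finset (Fin K)) (C : Finset (Fin K))
    (hUcard : ∀ i < N, (U i).card = M) (hCcard : C.card = V)
    (hunif : ∀ i < N, ∀ j, θ i j = if j ∈ U i then (1 : ℝ) / M else 0)
    (hinter : ∀ i < N, ∀ i' < N, i ≠ i' → U i ∩ U i' = C) :
    (⨆ i ∈ Finset.range N,
        KL (θ i) (fun j => (1 / (N : ℝ)) * ∑ k ∈ Finset.range N, θ k j)) =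
      ENNReal.ofReal ((((M : ℝ) - V) / M) * Real.log N) ∧
    Dstar K N θ = ENNReal.ofReal ((((M : ℝ) - V) / M) * Real.log N) := by
  have hθ : ∀ i ∈ range N, θ i = uniformOn (U i) := fun i hi => by
    ext j
    rw [hunif i (mem_range.1 hi), uniformOn, hUcard i (mem_range.1 hi)]
  have hU : ∀ i ∈ range N, #(U i) = M := fun i hi => hUcard i (mem_range.1 hi)
  have hprob : ∀ i ∈ range N, IsProbVec (θ i) := fun i hi =>
    hθ i hi ▸ isProbVec_uniformOn (card_pos.1 (hM.trans_eq (hU i hi).symm))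
  have hw_sum : ∑ _i ∈ range N, 1 / (N : ℝ) = 1 := by
    rw [sum_const, card_range, nsmul_eq_mul, mul_one_div_cancel (by positivity)]
  have hmix : mixture (range N) (fun _ => 1 / (N : ℝ)) θ =
      mixture (range N) (fun _ => 1 / (N : ℝ)) fun k => uniformOn (U k) :=
    funext fun j => sum_congr rfl fun i hi => by rw [hθ i hi]
  have hKL : ∀ i ∈ range N, KL (θ i) (mixture (range N) (fun _ => 1 / (N : ℝ)) θ) =
      ENNReal.ofReal (((M : ℝ) - V) / M * Real.log N) := fun i hi => by
    have hs : (range N).Nontrivial := one_lt_card_iff_nontrivial.1 (by rwa [card_range])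
    have hpair : (range N : Set ℕ).Pairwise fun i k => U i ∩ U k = C := fun i hi k hk hik =>
      hinter i (mem_range.1 hi) k (mem_range.1 hk) hik
    simpa only [hmix, hθ i hi, card_range, hCcard] using
      KL_uniformOn_mixture_of_pairwise_inter_eq hs hU hpair hi
  simp only [mul_sum]
  exact iSup_KL_mixture_eq_and_Dstar_eq (fun _ _ => by positivity) hw_sum hprob
    (fun i hi => (hKL i hi).le) fun i hi _ => hKL i hi

/-- For the radially symmetric uniform structure, `D*(Θ) = ((M-V)/M)·log N`, and the
infimum defining `D*(Θ)` is attained at the uniform mixture `(1/N)∑_θ θ`. -/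
theorem Dstar_radially_symmetric {K N M V : ℕ} (hN : 2 ≤ N) (hM : 0 < M) (hVM : V ≤ M)
    (θ : ℕ → Fin K → ℝ) (U : ℕ → Finset (Fin K)) (C : Finset (Fin K))
    (hUcard : ∀ i < N, (U i).card = M) (hCcard : C.card = V)
    (hunif : ∀ i < N, ∀ j, θ i j = if j ∈ U i then (1 : ℝ) / M else 0)
    (hinter : ∀ i < N, ∀ i' < N, i ≠ i' → U i ∩ U i' = C)
    (hcov : ∀ j : Fin K, ∃ i < N, j ∈ U i) :
    (⨆ i ∈ Finset.range N,
        KL (θ i) (fun j => (1 / (N : ℝ)) * ∑ k ∈ Finset.range N, θ k j)) =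
      ENNReal.ofReal ((((M : ℝ) - V) / M) * Real.log N) ∧
    Dstar K N θ = ENNReal.ofReal ((((M : ℝ) - V) / M) * Real.log N) :=
  Dstar_radially_symmetric_general hN hM θ U C hUcard hCcard hunif hinter
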